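/- Let σ' : ℰ → (0,∞), σ'' : ℰ → ℝ, and ω₁ ∈ ℝ with ω₁ ≠ 0; set σ := σ' + iω₁σ''. Let u₀⁽ʲ⁾ : 𝒱 → ℝ and u₁⁽ʲ⁾ : 𝒱 → ℂ, j = 1,…,N, satisfy (∇ᵀ(σ' ⊙ ∇u₀⁽ʲ⁾))_ℐ = 0 and (∇ᵀ(σ ⊙ ∇u₁⁽ʲ⁾))_ℐ = 0. Assume: (a) the hypotheses of the real-conductivity local-uniqueness theorem hold for σ' and the u₀⁽ʲ⁾, namely ⋃_j supp ∇u₀⁽ʲ⁾ = ℰ, (L_{σ'})_ℐℐ is invertible, and (L_{s⁽ʲ⁾⊙σ'})_ℐℐ is invertible with s⁽ʲ⁾ = 1 − 2·1_{supp ∇u₀⁽ʲ⁾}; (b) (L_σ)_ℐℐ is invertible; (c) with A⁽ʲ⁾ := −i diag(conj(∇u₁⁽ʲ⁾)) ∇ R_ℐᵀ ((L_σ)_ℐℐ)⁻¹ R_ℐ ∇ᵀ diag(∇u₁⁽ʲ⁾), the real matrix Re([A⁽¹⁾; … ; A⁽ᴺ⁾]) (vertical concatenation of real parts) has trivial nullspace.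 Then the linearized two-frequency inverse complex-conductivity problem from dissipated power is injective: if δσ', δσ'' : ℰ → ℝ, δu₀⁽ʲ⁾ : 𝒱 → ℝ, δu₁⁽ʲ⁾ : 𝒱 → ℂ satisfy, for all j, (δu₀⁽ʲ⁾)_ℬ = 0, (δu₁⁽ʲ⁾)_ℬ = 0, |∇u₀⁽ʲ⁾|² ⊙ δσ' + 2σ' ⊙ (∇u₀⁽ʲ⁾) ⊙ (∇δu₀⁽ʲ⁾) = 0, (∇ᵀ((∇u₀⁽ʲ⁾) ⊙ δσ'))_ℐ + (L_{σ'} δu₀⁽ʲ⁾)_ℐ = 0, δσ' ⊙ |∇u₁⁽ʲ⁾|² + σ' ⊙ conj(∇u₁⁽ʲ⁾) ⊙ ∇δu₁⁽ʲ⁾ + σ' ⊙ (∇u₁⁽ʲ⁾) ⊙ conj(∇δu₁⁽ʲ⁾) = 0, and (∇ᵀ((∇u₁⁽ʲ⁾) ⊙ (δσ' + iω₁δσ'')))_ℐ + (L_σ δu₁⁽ʲ⁾)_ℐ = 0, then δσ' = 0, δσ'' = 0, δu₀⁽ʲ⁾ = 0 and δu₁⁽ʲ⁾ = 0 for all j.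 -/

import Mathlib

open Matrix

noncomputable section

variable {E B I : Type*} [Fintype E] [Fintype B] [Fintype I]
  [DecidableEq E] [DecidableEq B] [DecidableEq I]

/-- Discrete gradient of an oriented graph whose edge `e` goes from node `tail e`
to node `head e`, so that `(dGrad R head tail *ᵥ u) e = u (head e) - u (tail e)`.
The node set is `𝒱 = B ⊕ I`, with boundary nodes `B` and interior nodes `I`. -/
def dGrad (R : Type*) [Ring R] (head tail : E → B ⊕ I) : Matrix E (B ⊕ I) R :=
  Matrix.of fun e v => (if v = head e then 1 else 0) - (if v = tail e then 1 else 0)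

/-- The weighted graph Laplacian `L_w = ∇ᵀ diag(w) ∇`. -/
def dLap (R : Type*) [CommRing R] (head tail : E → B ⊕ I) (w : E → R) :
    Matrix (B ⊕ I) (B ⊕ I) R :=
  (dGrad R head tail)ᵀ * Matrix.diagonal w * dGrad R head tail

/-- The restriction matrix `R_ℐ` from vectors on `𝒱 = B ⊕ I` to vectors on `I`;
its transpose extends by zero. -/
def RImat (R : Type*) [Ring R] : Matrix I (B ⊕ I) R :=
  Matrix.of fun i v => if v = Sum.inr i then 1 else 0

section Helpers

variable {R : Type*} [CommRing R]

lemma aux_lap (head tail : E → B ⊕ I) (w : E → R) (v : B ⊕ I → R) :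
    dLap R head tail w *ᵥ v =
      (dGrad R head tail)ᵀ *ᵥ (fun e => w e * (dGrad R head tail *ᵥ v) e) := by
  unfold dLap
  rw [← Matrix.mulVec_mulVec, ← Matrix.mulVec_mulVec]
  congr 1
  ext e
  rw [Matrix.mulVec_diagonal]

lemma aux_sub (M : Matrix (B ⊕ I) (B ⊕ I) R) (v : B ⊕ I → R) (hv : v ∘ Sum.inl = 0) :
    (M *ᵥ v) ∘ Sum.inr = M.submatrix Sum.inr Sum.inr *ᵥ (v ∘ Sum.inr) := by
  ext i
  have h : ∀ b, v (Sum.inl b) = 0 := fun b => congrFun hv b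
  simp [Matrix.mulVec, dotProduct, Fintype.sum_sum_type, h]

lemma aux_RI (y : B ⊕ I → R) : (RImat R : Matrix I (B ⊕ I) R) *ᵥ y = y ∘ Sum.inr := by
  ext i
  simp [RImat, Matrix.mulVec, dotProduct]

lemma aux_RIT (v : B ⊕ I → R) (hv : v ∘ Sum.inl = 0) :
    (RImat R : Matrix I (B ⊕ I) R)ᵀ *ᵥ (v ∘ Sum.inr) = v := by
  ext x
  have h : ∀ b, v (Sum.inl b) = 0 := fun b => congrFun hv b
  rcases x with b | i
  · simp [RImat, Matrix.mulVec, dotProduct, h]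
  · simp [RImat, Matrix.mulVec, dotProduct]

lemma aux_zero (M : Matrix (B ⊕ I) (B ⊕ I) R) (v : B ⊕ I → R) (hv : v ∘ Sum.inl = 0)
    (hM : IsUnit (M.submatrix Sum.inr Sum.inr : Matrix I I R))
    (h : (M *ᵥ v) ∘ Sum.inr = 0) : v = 0 := by
  rw [aux_sub M v hv] at h
  have h2 : v ∘ Sum.inr = 0 := by
    have := congrArg (fun y => (M.submatrix Sum.inr Sum.inr : Matrix I I R)⁻¹ *ᵥ y) h
    simpa [Matrix.mulVec_mulVec,
      Matrix.nonsing_inv_mul _ ((Matrix.isUnit_iff_isUnit_det _).1 hM)] using this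
  rw [← aux_RIT v hv, h2, Matrix.mulVec_zero]

end Helpers

/-- local uniqueness for the two-frequency inverse complex-conductivity
problem from dissipated power measurements. -/
theorem complex_conductivity_linearization_injective
    (head tail : E → B ⊕ I) (hloop : ∀ e, head e ≠ tail e)
    (σ' : E → ℝ) (hσ' : ∀ e, 0 < σ' e) (σ'' : E → ℝ) (ω₁ : ℝ) (hω₁ : ω₁ ≠ 0)
    (σc : E → ℂ) (hσc : σc = fun e => (σ' e : ℂ) + (ω₁ : ℂ) * (σ'' e : ℂ) * Complex.I)
    (N : ℕ) (u₀ : Fin N → B ⊕ I → ℝ) (u₁ : Fin N → B ⊕ I → ℂ)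
    (hu₀ : ∀ j, (((dGrad ℝ head tail)ᵀ *ᵥ fun e => σ' e * (dGrad ℝ head tail *ᵥ u₀ j) e) ∘
      Sum.inr) = 0)
    (hu₁ : ∀ j, (((dGrad ℂ head tail)ᵀ *ᵥ fun e => σc e * (dGrad ℂ head tail *ᵥ u₁ j) e) ∘
      Sum.inr) = 0)
    -- (a) hypotheses of the real-conductivity local-uniqueness theorem for σ' and u₀
    (s : Fin N → E → ℝ)
    (hs : ∀ j e, s j e = 1 - 2 * (if (dGrad ℝ head tail *ᵥ u₀ j) e ≠ 0 then 1 else 0))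
    (hcover : ∀ e : E, ∃ j, (dGrad ℝ head tail *ᵥ u₀ j) e ≠ 0)
    (hinv : IsUnit ((dLap ℝ head tail σ').submatrix Sum.inr Sum.inr))
    (hinvs : ∀ j, IsUnit
      ((dLap ℝ head tail (fun e => s j e * σ' e)).submatrix Sum.inr Sum.inr))
    -- (b) invertibility at the nonzero frequency
    (hinvc : IsUnit ((dLap ℂ head tail σc).submatrix Sum.inr Sum.inr))
    -- (c) the real part of the stacked matrices A⁽ʲ⁾ has trivial nullspace
    (A : Fin N → Matrix E E ℂ)
    (hA : ∀ j, A j = (-Complex.I) •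
      (Matrix.diagonal (fun e => starRingEnd ℂ ((dGrad ℂ head tail *ᵥ u₁ j) e)) *
        dGrad ℂ head tail * (RImat ℂ : Matrix I (B ⊕ I) ℂ)ᵀ *
        ((dLap ℂ head tail σc).submatrix Sum.inr Sum.inr)⁻¹ *
        (RImat ℂ : Matrix I (B ⊕ I) ℂ) * (dGrad ℂ head tail)ᵀ *
        Matrix.diagonal (fun e => (dGrad ℂ head tail *ᵥ u₁ j) e)))
    (hfullrank : ∀ x : E → ℝ,
      (∀ j, (Matrix.of fun e e' => (A j e e').re) *ᵥ x = 0) → x = 0)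
    -- the linearized equations
    (δσ' δσ'' : E → ℝ) (δu₀ : Fin N → B ⊕ I → ℝ) (δu₁ : Fin N → B ⊕ I → ℂ)
    (h2a : ∀ j, δu₀ j ∘ Sum.inl = 0)
    (h2b : ∀ j, δu₁ j ∘ Sum.inl = 0)
    (h3 : ∀ j e, ((dGrad ℝ head tail *ᵥ u₀ j) e) ^ 2 * δσ' e +
      2 * σ' e * (dGrad ℝ head tail *ᵥ u₀ j) e * (dGrad ℝ head tail *ᵥ δu₀ j) e = 0)
    (h4 : ∀ j, (((dGrad ℝ head tail)ᵀ *ᵥ fun e => (dGrad ℝ head tail *ᵥ u₀ j) e * δσ' e) ∘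
        Sum.inr) + (dLap ℝ head tail σ' *ᵥ δu₀ j) ∘ Sum.inr = 0)
    (h5 : ∀ j e, (δσ' e : ℂ) * ((‖(dGrad ℂ head tail *ᵥ u₁ j) e‖ : ℝ) : ℂ) ^ 2 +
      (σ' e : ℂ) * starRingEnd ℂ ((dGrad ℂ head tail *ᵥ u₁ j) e) *
        (dGrad ℂ head tail *ᵥ δu₁ j) e +
      (σ' e : ℂ) * (dGrad ℂ head tail *ᵥ u₁ j) e *
        starRingEnd ℂ ((dGrad ℂ head tail *ᵥ δu₁ j) e) = 0)
    (h6 : ∀ j, (((dGrad ℂ head tail)ᵀ *ᵥ fun e =>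
        (dGrad ℂ head tail *ᵥ u₁ j) e * ((δσ' e : ℂ) + (ω₁ : ℂ) * (δσ'' e : ℂ) * Complex.I)) ∘
        Sum.inr) + (dLap ℂ head tail σc *ᵥ δu₁ j) ∘ Sum.inr = 0) :
    δσ' = 0 ∧ δσ'' = 0 ∧ (∀ j, δu₀ j = 0) ∧ (∀ j, δu₁ j = 0) := by
  have hu0 : ∀ j, δu₀ j = 0 := by
    intro j
    refine aux_zero _ _ (h2a j) (hinvs j) ?_
    rw [← h4 j, aux_lap, aux_lap]
    rw [← Pi.add_comp, ← Matrix.mulVec_add]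
    congr 2
    ext e
    simp only [Pi.add_apply]
    rw [hs]
    by_cases hg : (dGrad ℝ head tail *ᵥ u₀ j) e = 0
    · simp [hg]
    · have := h3 j e
      have h' : (dGrad ℝ head tail *ᵥ u₀ j) e * δσ' e +
          2 * σ' e * (dGrad ℝ head tail *ᵥ δu₀ j) e = 0 := by
        apply mul_left_cancel₀ hg
        linear_combination this
      simp only [ne_eq, hg, not_false_eq_true, if_true]
      linear_combination -h'
  have hds : δσ' = 0 := by
    ext e
    obtain ⟨j, hj⟩ := hcover e
    have := h3 j e
    rw [hu0 j] at this
    simpa [hj] using this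
  subst hds
  have hdet := (Matrix.isUnit_iff_isUnit_det _).1 hinvc
  have hds2 : δσ'' = 0 := by
    apply hfullrank
    intro j
    have key : ∀ e, (ω₁ : ℂ) * (A j *ᵥ (fun e => (δσ'' e : ℂ))) e =
        starRingEnd ℂ ((dGrad ℂ head tail *ᵥ u₁ j) e) * (dGrad ℂ head tail *ᵥ δu₁ j) e := by
      intro e
      have h := h6 j
      rw [aux_sub _ _ (h2b j)] at h
      have hv : (fun e => (dGrad ℂ head tail *ᵥ u₁ j) e *
          ((((0 : E → ℝ) e : ℝ) : ℂ) + (ω₁ : ℂ) * (δσ'' e : ℂ) * Complex.I)) =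
          ((ω₁ : ℂ) * Complex.I) • (Matrix.diagonal (fun e => (dGrad ℂ head tail *ᵥ u₁ j) e) *ᵥ
            (fun e => (δσ'' e : ℂ))) := by
        ext e
        simp only [Pi.smul_apply, Matrix.mulVec_diagonal, smul_eq_mul, Pi.zero_apply,
          Complex.ofReal_zero]
        ring
      rw [hv, ← aux_RI] at h
      have h' := congrArg
        (fun y => ((dLap ℂ head tail σc).submatrix Sum.inr Sum.inr : Matrix I I ℂ)⁻¹ *ᵥ y) h
      simp only [Matrix.mulVec_add, Matrix.mulVec_zero, Matrix.mulVec_smul] at h'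
      rw [Matrix.mulVec_mulVec (δu₁ j ∘ Sum.inr), Matrix.nonsing_inv_mul _ hdet,
        Matrix.one_mulVec] at h'
      have h'' := eq_neg_of_add_eq_zero_right h'
      rw [← aux_RIT (δu₁ j) (h2b j), h'', hA]
      simp only [Matrix.smul_mulVec, ← Matrix.mulVec_mulVec, Matrix.mulVec_neg,
        Matrix.mulVec_smul, Pi.smul_apply, Pi.neg_apply, smul_eq_mul]
      rw [Matrix.mulVec_diagonal]
      ring
    ext e
    have h5' := h5 j e
    have hre : (starRingEnd ℂ ((dGrad ℂ head tail *ᵥ u₁ j) e) *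
        (dGrad ℂ head tail *ᵥ δu₁ j) e).re = 0 := by
      have := congrArg Complex.re h5'
      simp only [Pi.zero_apply, Complex.ofReal_zero, zero_mul, zero_add, Complex.add_re,
        Complex.mul_re, Complex.mul_im, Complex.conj_re, Complex.conj_im, Complex.ofReal_re,
        Complex.ofReal_im, Complex.zero_re] at this ⊢
      have hp := (hσ' e).ne'
      apply mul_left_cancel₀ hp
      linear_combination this / 2
    rw [← key e] at hre
    have hre2 : ((A j *ᵥ (fun e => (δσ'' e : ℂ))) e).re = 0 := by
      rw [Complex.re_ofReal_mul] at hre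
      exact (mul_eq_zero.1 hre).resolve_left hω₁
    simpa [Matrix.mulVec, dotProduct] using hre2
  subst hds2
  refine ⟨rfl, rfl, hu0, fun j => ?_⟩
  refine aux_zero _ _ (h2b j) hinvc ?_
  have h := h6 j
  have hz : (fun e => (dGrad ℂ head tail *ᵥ u₁ j) e *
      ((((0 : E → ℝ) e : ℝ) : ℂ) + (ω₁ : ℂ) * (((0 : E → ℝ) e : ℝ) : ℂ) * Complex.I)) = 0 := by
    ext e
    simp
  rw [hz, Matrix.mulVec_zero] at h
  simpa using h
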